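/- Let k be an algebraically closed field and n ≥ 1. Let w ∈ S_n be of minimal Coxeter length (number of inversions) in its conjugacy class, and let λ be the cycle type of w, a partition of n. Then: (1) there exists a unipotent matrix u ∈ B P_w B ⊆ GL_n(k) whose Jordan type is λ (i.e. rank((u−1)^m) = Σ_j max(λ_j − m, 0) for all m ≥ 1); and (2) every unipotent matrix g ∈ B P_w B satisfies rank((g−1)^m) ≥ Σ_j max(λ_j − m, 0) for all m ≥ 1, i.e. the conjugacy class of Jordan type λ lies in the closure of the conjugacy class of g. (The case G = GL_n of the theorem that the map Φ from conjugacy classes in the Weyl group to unipotent classes is the identity map under the identification of both sides with partitions of n.) -/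

import Mathlib

/-- A square matrix is upper triangular if all entries below the diagonal vanish. -/
def IsUpperTriangular {k : Type*} [Field k] {n : ℕ} (A : Matrix (Fin n) (Fin n) k) : Prop :=
  ∀ i j : Fin n, j < i → A i j = 0

/-- The permutation matrix of `σ`, with `(P_σ)_{i,j} = 1` if `i = σ j` and `0` otherwise. -/
def permMat {k : Type*} [Field k] {n : ℕ} (σ : Equiv.Perm (Fin n)) :
    Matrix (Fin n) (Fin n) k :=
  Matrix.of fun i j => if i = σ j then 1 else 0

/-- The `(B,B)`-double coset `B A B` of a matrix `A`, where `B` is the group of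
invertible upper triangular matrices. -/
def doubleCoset {k : Type*} [Field k] {n : ℕ} (A : Matrix (Fin n) (Fin n) k) :
    Set (Matrix (Fin n) (Fin n) k) :=
  {M | ∃ b₁ b₂ : Matrix (Fin n) (Fin n) k, IsUpperTriangular b₁ ∧ IsUpperTriangular b₂ ∧
    IsUnit b₁.det ∧ IsUnit b₂.det ∧ M = b₁ * A * b₂}

/-- The number of inversions of a permutation `σ` (its Coxeter length in `S_n`). -/
def invCount {n : ℕ} (σ : Equiv.Perm (Fin n)) : ℕ :=
  (Finset.univ.filter fun p : Fin n × Fin n => p.1 < p.2 ∧ σ p.2 < σ p.1).card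

/-- `Σ_j max(λ_j - m, 0)`, where `λ` is the cycle type (with fixed points included, so a
partition of `n`) of the permutation `w`; this is `rank ((u-1)^m)` for a unipotent `u`
of Jordan type `λ`. -/
def expectedRank {n : ℕ} (w : Equiv.Perm (Fin n)) (m : ℕ) : ℕ :=
  ((Equiv.Perm.partition w).parts.map fun p => p - m).sum

/-
Relabelling the points cycle by cycle shows that the conjugacy class of `w` contains an element of
length at most `n - c`, where `c` is the number of cycles. A word for `w` of that length in the
Coxeter generators cannot repeat a letter: seen as edges of the path on the `n` points, its letters
form a subgraph whose connected components are exactly the cycles of `w`. So `expectedRank w m`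
counts the points from which `m` consecutive letters lead upwards.

Lower bound: as no letter is repeated, Bruhat double cosets multiply along the word. Hence any `g`
in the double coset of a word factors along every splitting of the word, and `x * y ↦ y * x`
conjugates it into the double coset of the rotated word. By such rotations, and by commuting distant
letters, one reaches the word with the same letters in increasing order. There every element `g` is
upper Hessenberg, with nonzero subdiagonal entries at the letters, and `(g - 1) ^ m` has a
nonsingular triangular submatrix whose columns are the points counted above.

Upper bound: the product of the elementary lower unipotent matrices along the word lies in the
double coset, and it is lower triangular with blocks the connected components, so that
`(u - 1) ^ m` has no more nonzero columns than that.
-/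

open Equiv Finset

section CycleType

variable {n : ℕ} (w : Perm (Fin n))

/-- The elements of the cycle of `x` under `w` that are larger than `x`. The sizes of these sets
encode the cycle type of `w` without referring to individual cycles. -/
def largerInCycle (x : Fin n) : Finset (Fin n) :=
  {y | w.SameCycle x y ∧ x < y}

/-- The largest element of the cycle of `x` under `w`; it serves as the distinguished
representative of that cycle. -/
def cycleMax (x : Fin n) : Fin n :=
  ({y | w.SameCycle x y} : Finset (Fin n)).max' ⟨x, by simp [Perm.SameCycle.refl]⟩

variable {w} {x y : Fin n}

lemma mem_largerInCycle : y ∈ largerInCycle w x ↔ w.SameCycle x y ∧ x < y := by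
  simp [largerInCycle]

lemma sameCycle_cycleMax (w : Perm (Fin n)) (x : Fin n) : w.SameCycle x (cycleMax w x) :=
  (mem_filter.1 (max'_mem {y | w.SameCycle x y} _)).2

lemma le_cycleMax (h : w.SameCycle x y) : y ≤ cycleMax w x :=
  le_max' _ _ (by simpa using h)

lemma self_le_cycleMax (w : Perm (Fin n)) (x : Fin n) : x ≤ cycleMax w x :=
  le_cycleMax (.refl w x)

lemma cycleMax_eq_of_sameCycle (h : w.SameCycle x y) : cycleMax w x = cycleMax w y :=
  le_antisymm (le_cycleMax (h.symm.trans (sameCycle_cycleMax w x)))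
    (le_cycleMax (h.trans (sameCycle_cycleMax w y)))

lemma cycleMax_apply (w : Perm (Fin n)) (x : Fin n) : cycleMax w (w x) = cycleMax w x :=
  (cycleMax_eq_of_sameCycle (Perm.sameCycle_apply_right.2 (.refl w x))).symm

lemma cycleMax_cycleMax (w : Perm (Fin n)) (x : Fin n) :
    cycleMax w (cycleMax w x) = cycleMax w x :=
  (cycleMax_eq_of_sameCycle (sameCycle_cycleMax w x)).symm

lemma largerInCycle_nonempty : (largerInCycle w x).Nonempty ↔ x ≠ cycleMax w x := by
  constructor
  · rintro ⟨y, hy⟩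
    obtain ⟨hxy, hlt⟩ := mem_largerInCycle.1 hy
    exact (hlt.trans_le (le_cycleMax hxy)).ne
  · exact fun h => ⟨cycleMax w x,
      mem_largerInCycle.2 ⟨sameCycle_cycleMax w x, (self_le_cycleMax w x).lt_of_ne h⟩⟩

lemma mem_support_of_largerInCycle_nonempty (h : (largerInCycle w x).Nonempty) :
    x ∈ w.support := by
  rw [Perm.mem_support]
  intro hfix
  obtain ⟨y, hy⟩ := h
  obtain ⟨⟨i, hi⟩, hlt⟩ := mem_largerInCycle.1 hy
  rw [Perm.zpow_apply_eq_self_of_apply_eq_self hfix] at hi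
  exact hlt.ne hi

lemma filter_lt_support_eq_largerInCycle {c : Perm (Fin n)} (hc : c ∈ w.cycleFactorsFinset)
    (hx : x ∈ c.support) : {y ∈ c.support | x < y} = largerInCycle w x := by
  have hxw : x ∈ w.support := Perm.mem_cycleFactorsFinset_support_le hc hx
  ext y
  rw [mem_filter, mem_largerInCycle, Perm.cycle_is_cycleOf hx hc, Perm.mem_support_cycleOf_iff,
    and_iff_left hxw]

lemma card_filter_le_card_filter_lt {α : Type*} [LinearOrder α] (S : Finset α) (m : ℕ) :
    #{x ∈ S | m ≤ #{y ∈ S | x < y}} = #S - m := by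
  induction S using Finset.induction_on_min with
  | empty => simp
  | insert a s ha ih =>
    have ha_notMem : a ∉ s := fun h => lt_irrefl _ (ha a h)
    have above_of_mem : ∀ x ∈ s, ({y ∈ insert a s | x < y} : Finset α) = {y ∈ s | x < y} :=
      fun x hx => by rw [filter_insert, if_neg (ha x hx).not_gt]
    have above_min : ({y ∈ insert a s | a < y} : Finset α) = s := by
      rw [filter_insert, if_neg (lt_irrefl _), filter_true_of_mem ha]
    rw [filter_insert, above_min, filter_congr fun x hx => by rw [above_of_mem x hx],
      card_insert_of_notMem ha_notMem]
    split_ifs with h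
    · rw [card_insert_of_notMem fun h' => ha_notMem (mem_filter.1 h').1, ih]
      omega
    · rw [ih]
      omega

lemma expectedRank_eq_sum_cycleFactorsFinset (w : Perm (Fin n)) {m : ℕ} (hm : 1 ≤ m) :
    expectedRank w m = ∑ c ∈ w.cycleFactorsFinset, (#c.support - m) := by
  rw [expectedRank, Perm.parts_partition, Multiset.map_add, Multiset.sum_add,
    Multiset.map_replicate, Multiset.sum_replicate, Nat.sub_eq_zero_of_le hm, smul_zero, add_zero,
    Perm.cycleType_def, Multiset.map_map]
  rfl

-- In a cycle of length `p`, exactly `max (p - m) 0` points have at least `m` larger points.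
theorem expectedRank_eq_card (w : Perm (Fin n)) (m : ℕ) :
    expectedRank w m = #{x | m ≤ #(largerInCycle w x)} := by
  rcases m.eq_zero_or_pos with rfl | hm
  · simp [expectedRank, (Perm.partition w).parts_sum]
  have cycleOf_mem : ∀ x ∈ ({x | m ≤ #(largerInCycle w x)} : Finset (Fin n)),
      w.cycleOf x ∈ w.cycleFactorsFinset := fun x hx =>
    Perm.cycleOf_mem_cycleFactorsFinset_iff.2 <| mem_support_of_largerInCycle_nonempty <|
      card_pos.1 (hm.trans_le (mem_filter.1 hx).2)
  rw [expectedRank_eq_sum_cycleFactorsFinset w hm, card_eq_sum_card_fiberwise cycleOf_mem]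
  refine sum_congr rfl fun c hc => ?_
  rw [← card_filter_le_card_filter_lt c.support m]
  congr 1
  ext x
  simp only [mem_filter, mem_univ, true_and]
  constructor
  · rintro ⟨hx, h⟩
    rw [filter_lt_support_eq_largerInCycle hc hx] at h
    exact ⟨h, (Perm.cycle_is_cycleOf hx hc).symm⟩
  · rintro ⟨h, rfl⟩
    have hx : x ∈ (w.cycleOf x).support := by
      rw [Perm.mem_support_cycleOf_iff]
      exact ⟨.refl _ _, Perm.cycleOf_mem_cycleFactorsFinset_iff.1 hc⟩
    exact ⟨hx, by rwa [filter_lt_support_eq_largerInCycle hc hx]⟩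

lemma expectedRank_one (w : Perm (Fin n)) : expectedRank w 1 = #{x | x ≠ cycleMax w x} := by
  simp only [expectedRank_eq_card, Nat.one_le_iff_ne_zero, card_ne_zero, largerInCycle_nonempty]

end CycleType

section ShortConjugate

variable {n : ℕ} {w : Perm (Fin n)} {x y : Fin n}

lemma exists_isConj_invCount_eq {α : Type*} [LinearOrder α] (w : Perm (Fin n)) {f : Fin n → α}
    (hf : Function.Injective f) :
    ∃ v, IsConj w v ∧ invCount v =
      #{p : Fin n × Fin n | f p.1 < f p.2 ∧ f (w p.2) < f (w p.1)} := by
  let π := Tuple.sort f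
  have hmono : StrictMono (f ∘ π) :=
    (Tuple.monotone_sort f).strictMono_of_injective (hf.comp π.injective)
  refine ⟨π⁻¹ * w * π, isConj_iff.2 ⟨π⁻¹, by simp⟩, ?_⟩
  refine card_equiv (π.prodCongr π) fun p => ?_
  simp only [mem_filter, mem_univ, true_and, prodCongr_apply, Prod.map]
  rw [← hmono.lt_iff_lt, ← hmono.lt_iff_lt]
  simp

lemma exists_pow_apply_eq_cycleMax (w : Perm (Fin n)) (x : Fin n) :
    ∃ t : ℕ, (w ^ t) x = cycleMax w x :=
  (sameCycle_cycleMax w x).exists_nat_pow_eq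

/-- The number of applications of `w` that take `x` to the largest element of its cycle. -/
def stepsToCycleMax (w : Perm (Fin n)) (x : Fin n) : ℕ :=
  Nat.find (exists_pow_apply_eq_cycleMax w x)

lemma pow_stepsToCycleMax_apply (w : Perm (Fin n)) (x : Fin n) :
    (w ^ stepsToCycleMax w x) x = cycleMax w x :=
  Nat.find_spec (exists_pow_apply_eq_cycleMax w x)

lemma stepsToCycleMax_le {t : ℕ} (h : (w ^ t) x = cycleMax w x) : stepsToCycleMax w x ≤ t :=
  Nat.find_min' _ h

lemma stepsToCycleMax_eq_zero : stepsToCycleMax w x = 0 ↔ x = cycleMax w x := by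
  simp [stepsToCycleMax]

lemma stepsToCycleMax_apply_add_one (hx : x ≠ cycleMax w x) :
    stepsToCycleMax w (w x) + 1 = stepsToCycleMax w x := by
  obtain ⟨t, ht⟩ := Nat.exists_eq_succ_of_ne_zero (stepsToCycleMax_eq_zero.not.2 hx)
  have hpow := pow_stepsToCycleMax_apply w x
  have hpow' := pow_stepsToCycleMax_apply w (w x)
  rw [ht, Nat.succ_eq_add_one, pow_succ, Perm.mul_apply, ← cycleMax_apply] at hpow
  rw [cycleMax_apply, ← Perm.mul_apply, ← pow_succ] at hpow'
  have := stepsToCycleMax_le hpow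
  have := stepsToCycleMax_le hpow'
  omega

/-- The sorting key under which each cycle of `w` becomes a block of consecutive elements, listed
in the order in which `w` runs through them and ending with the largest one. -/
def cycleKey (w : Perm (Fin n)) (x : Fin n) : Fin n ×ₗ ℕᵒᵈ :=
  toLex (cycleMax w x, OrderDual.toDual (stepsToCycleMax w x))

lemma cycleKey_lt_cycleKey : cycleKey w x < cycleKey w y ↔ cycleMax w x < cycleMax w y ∨
    cycleMax w x = cycleMax w y ∧ stepsToCycleMax w y < stepsToCycleMax w x :=
  Prod.Lex.lt_iff

lemma cycleKey_injective (w : Perm (Fin n)) : Function.Injective (cycleKey w) := by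
  intro x y h
  have hmax : cycleMax w x = cycleMax w y := congrArg (fun z => (ofLex z).1) h
  have hsteps : stepsToCycleMax w x = stepsToCycleMax w y :=
    congrArg (fun z => OrderDual.ofDual (ofLex z).2) h
  apply (w ^ stepsToCycleMax w y).injective
  rw [pow_stepsToCycleMax_apply, ← hsteps, pow_stepsToCycleMax_apply, hmax]

lemma eq_cycleMax_of_cycleKey_inversion (h : cycleKey w x < cycleKey w y)
    (h' : cycleKey w (w y) < cycleKey w (w x)) : x ≠ cycleMax w x ∧ y = cycleMax w x := by
  rw [cycleKey_lt_cycleKey] at h h'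
  rw [cycleMax_apply, cycleMax_apply] at h'
  obtain ⟨hmax, hsteps⟩ : cycleMax w x = cycleMax w y ∧
      stepsToCycleMax w y < stepsToCycleMax w x := by
    refine h.resolve_left fun hlt => ?_
    exact h'.elim hlt.not_gt fun h'' => hlt.ne' h''.1
  have hsteps' : stepsToCycleMax w (w x) < stepsToCycleMax w (w y) :=
    (h'.resolve_left hmax.not_gt).2
  have hx : x ≠ cycleMax w x := by
    rw [Ne, ← stepsToCycleMax_eq_zero]
    omega
  refine ⟨hx, ?_⟩
  by_contra hy
  rw [hmax] at hy
  have := stepsToCycleMax_apply_add_one hx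
  have := stepsToCycleMax_apply_add_one hy
  omega

theorem exists_isConj_invCount_le (w : Perm (Fin n)) :
    ∃ v, IsConj w v ∧ invCount v ≤ expectedRank w 1 := by
  obtain ⟨v, hv, hcount⟩ := exists_isConj_invCount_eq w (cycleKey_injective w)
  refine ⟨v, hv, ?_⟩
  rw [hcount, expectedRank_one]
  have inversion : ∀ p ∈ ({p | cycleKey w p.1 < cycleKey w p.2 ∧
      cycleKey w (w p.2) < cycleKey w (w p.1)} : Finset (Fin n × Fin n)),
      p.1 ≠ cycleMax w p.1 ∧ p.2 = cycleMax w p.1 := fun p hp =>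
    eq_cycleMax_of_cycleKey_inversion (mem_filter.1 hp).2.1 (mem_filter.1 hp).2.2
  refine card_le_card_of_injOn Prod.fst (fun p hp => by simpa using (inversion p hp).1) ?_
  intro p hp q hq h
  exact Prod.ext h (by rw [(inversion p hp).2, (inversion q hq).2, h])

end ShortConjugate

section Words

variable {N : ℕ}

/-- The transposition of the adjacent points `i` and `i + 1`, a Coxeter generator of the symmetric
group on `N + 1` points; the generators are indexed by `Fin N`. -/
def simpleSwap (i : Fin N) : Perm (Fin (N + 1)) :=
  swap i.castSucc i.succ

@[simp]
lemma simpleSwap_castSucc (i : Fin N) : simpleSwap i i.castSucc = i.succ :=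
  swap_apply_left _ _

@[simp]
lemma simpleSwap_succ (i : Fin N) : simpleSwap i i.succ = i.castSucc :=
  swap_apply_right _ _

@[simp]
lemma simpleSwap_mul_self (i : Fin N) : simpleSwap i * simpleSwap i = 1 :=
  swap_mul_self _ _

lemma val_simpleSwap (i : Fin N) (x : Fin (N + 1)) : (simpleSwap i x : ℕ) =
    if (x : ℕ) = i then (i : ℕ) + 1 else if (x : ℕ) = i + 1 then (i : ℕ) else x := by
  rw [simpleSwap, swap_apply_def]
  simp only [Fin.ext_iff, Fin.val_castSucc, Fin.val_succ]
  split_ifs <;> simp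

lemma simpleSwap_lt_simpleSwap {i : Fin N} {a b : Fin (N + 1)} (h : a < b)
    (hab : (a, b) ≠ (i.castSucc, i.succ)) : simpleSwap i a < simpleSwap i b := by
  rw [Ne, Prod.mk.injEq, Fin.ext_iff, Fin.ext_iff, Fin.val_castSucc, Fin.val_succ] at hab
  rw [Fin.lt_def] at h ⊢
  rw [val_simpleSwap, val_simpleSwap]
  split_ifs <;> omega

lemma commute_simpleSwap {i j : Fin N} (h : (i : ℕ) + 1 < j) :
    Commute (simpleSwap i) (simpleSwap j) := by
  ext x
  simp only [Perm.mul_apply, val_simpleSwap]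
  split_ifs <;> omega

lemma invCount_mul_simpleSwap_lt {w : Perm (Fin (N + 1))} {i : Fin N}
    (h : w i.succ < w i.castSucc) : invCount (w * simpleSwap i) < invCount w := by
  have hmem : (i.castSucc, i.succ) ∈
      ({p | p.1 < p.2 ∧ w p.2 < w p.1} : Finset (Fin (N + 1) × Fin (N + 1))) := by simp [h]
  let e := (simpleSwap i).prodCongr (simpleSwap i)
  refine (card_le_card_of_injOn e ?_ e.injective.injOn).trans_lt (card_erase_lt_of_mem hmem)
  intro p hp
  obtain ⟨hlt, hw⟩ := (mem_filter.1 hp).2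
  have hne : p ≠ (i.castSucc, i.succ) := by
    rintro rfl
    rw [Perm.mul_apply, Perm.mul_apply, simpleSwap_succ, simpleSwap_castSucc] at hw
    exact hw.not_gt h
  rw [mem_coe, mem_erase, mem_filter]
  refine ⟨fun heq => ?_, mem_univ _, simpleSwap_lt_simpleSwap hlt hne, hw⟩
  have hp : p = (i.succ, i.castSucc) := e.injective (heq.trans (by simp [e]))
  rw [hp] at hlt
  exact hlt.not_gt i.castSucc_lt_succ

/-- The product of a word in the Coxeter generators. -/
def wordProd (l : List (Fin N)) : Perm (Fin (N + 1)) :=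
  (l.map simpleSwap).prod

@[simp]
lemma wordProd_nil : wordProd ([] : List (Fin N)) = 1 :=
  rfl

@[simp]
lemma wordProd_cons (i : Fin N) (l : List (Fin N)) :
    wordProd (i :: l) = simpleSwap i * wordProd l :=
  List.prod_cons

@[simp]
lemma wordProd_append (l l' : List (Fin N)) : wordProd (l ++ l') = wordProd l * wordProd l' := by
  simp [wordProd]

lemma commute_wordProd {l l' : List (Fin N)} (h : ∀ i ∈ l, ∀ j ∈ l', (i : ℕ) + 1 < j) :
    Commute (wordProd l) (wordProd l') := by
  refine Commute.list_prod_left _ _ fun x hx => Commute.list_prod_right _ _ fun y hy => ?_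
  obtain ⟨i, hi, rfl⟩ := List.mem_map.1 hx
  obtain ⟨j, hj, rfl⟩ := List.mem_map.1 hy
  exact commute_simpleSwap (h i hi j hj)

theorem exists_wordProd_eq (w : Perm (Fin (N + 1))) :
    ∃ l : List (Fin N), wordProd l = w ∧ l.length ≤ invCount w := by
  induction hd : invCount w using Nat.strong_induction_on generalizing w with
  | _ d ih =>
    subst hd
    by_cases hex : ∃ i : Fin N, w i.succ < w i.castSucc
    · obtain ⟨i, hi⟩ := hex
      have hlt := invCount_mul_simpleSwap_lt hi
      obtain ⟨l, hl, hlen⟩ := ih _ hlt _ rfl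
      refine ⟨l ++ [i], by simp [hl, mul_assoc], ?_⟩
      rw [List.length_append, List.length_singleton]
      omega
    · push Not at hex
      have hw : w = 1 := (Perm.monotone_iff w).1 (Fin.monotone_iff_le_succ.2 hex)
      exact ⟨[], by simp [hw], by simp⟩

end Words

section Paths

variable {N : ℕ}

/-- All the letters of `S` needed to go up from `b` to `a` are present. Regarding the letter `i` as
an edge between the points `i` and `i + 1`, a set of letters is a subgraph of the path on `N + 1`
points. The condition is vacuous unless `b < a`. -/
def ContainsPath (S : Finset (Fin N)) (b a : Fin (N + 1)) : Prop :=
  ∀ i : Fin N, b ≤ i.castSucc → i.castSucc < a → i ∈ S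

instance (S : Finset (Fin N)) (b a : Fin (N + 1)) : Decidable (ContainsPath S b a) :=
  inferInstanceAs (Decidable (∀ i : Fin N, b ≤ i.castSucc → i.castSucc < a → i ∈ S))

/-- The points from which `m` consecutive letters of `S` lead upwards. -/
def runStarts (S : Finset (Fin N)) (m : ℕ) : Finset (Fin (N + 1)) :=
  {x | ∃ y : Fin (N + 1), (y : ℕ) = x + m ∧ ContainsPath S x y}

variable {S : Finset (Fin N)} {a b c : Fin (N + 1)} {l : List (Fin N)} {x y : Fin (N + 1)} {m : ℕ}

lemma mem_runStarts :
    x ∈ runStarts S m ↔ ∃ y : Fin (N + 1), (y : ℕ) = x + m ∧ ContainsPath S x y := by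
  simp [runStarts]

lemma ContainsPath.refl (S : Finset (Fin N)) (a : Fin (N + 1)) : ContainsPath S a a :=
  fun _ h h' => absurd h' h.not_gt

lemma ContainsPath.trans (h : ContainsPath S c b) (h' : ContainsPath S b a) :
    ContainsPath S c a := fun i hc ha =>
  (lt_or_ge i.castSucc b).elim (h i hc) fun hb => h' i hb ha

lemma ContainsPath.mono_right (h : ContainsPath S b a) (hca : c ≤ a) : ContainsPath S b c :=
  fun i hb hc => h i hb (hc.trans_le hca)

lemma wordProd_apply_le_castSucc_iff {i : Fin N} (hi : i ∉ l) (x : Fin (N + 1)) :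
    wordProd l x ≤ i.castSucc ↔ x ≤ i.castSucc := by
  induction l with
  | nil => simp
  | cons j l ih =>
    obtain ⟨hij, hil⟩ := not_or.1 (List.mem_cons.not.1 hi)
    rw [← ih hil, wordProd_cons, Perm.mul_apply, Fin.le_def, Fin.le_def, val_simpleSwap,
      Fin.val_castSucc]
    rw [Fin.ext_iff] at hij
    split_ifs <;> omega

lemma containsPath_of_sameCycle (h : (wordProd l).SameCycle x y) :
    ContainsPath l.toFinset x y := by
  intro i hx hy
  by_contra hi
  rw [List.mem_toFinset] at hi
  obtain ⟨t, rfl⟩ := h.exists_nat_pow_eq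
  refine hy.not_ge ?_
  clear hy h
  induction t with
  | zero => exact hx
  | succ t ih => rwa [pow_succ', Perm.mul_apply, wordProd_apply_le_castSucc_iff hi]

lemma subset_image_castSucc_of_wordProd (l : List (Fin N)) :
    ({x | x ≠ cycleMax (wordProd l) x} : Finset _) ⊆ l.toFinset.image Fin.castSucc := by
  intro x hx
  have hlt := (self_le_cycleMax (wordProd l) x).lt_of_ne (mem_filter.1 hx).2
  obtain ⟨i, rfl⟩ : ∃ i : Fin N, i.castSucc = x :=
    ⟨x.castPred (hlt.trans_le (Fin.le_last _)).ne, Fin.castSucc_castPred _ _⟩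
  exact mem_image_of_mem _
    (containsPath_of_sameCycle (sameCycle_cycleMax (wordProd l) _) i le_rfl hlt)

lemma image_castSucc_eq_of_length_le (h : l.length ≤ expectedRank (wordProd l) 1) :
    ({x | x ≠ cycleMax (wordProd l) x} : Finset _) = l.toFinset.image Fin.castSucc := by
  refine eq_of_subset_of_card_le (subset_image_castSucc_of_wordProd l) ?_
  rw [← expectedRank_one]
  exact card_image_le.trans (l.toFinset_card_le.trans h)

lemma nodup_of_length_le (h : l.length ≤ expectedRank (wordProd l) 1) : l.Nodup := by
  refine Multiset.toFinset_card_eq_card_iff_nodup.1 (le_antisymm l.toFinset_card_le (h.trans ?_))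
  rw [expectedRank_one, image_castSucc_eq_of_length_le h]
  exact card_image_le

lemma ne_cycleMax_of_containsPath (h : l.length ≤ expectedRank (wordProd l) 1)
    (hpath : ContainsPath l.toFinset b a) (hb : b ≤ x) (ha : x < a) :
    x ≠ cycleMax (wordProd l) x := by
  obtain ⟨i, rfl⟩ : ∃ i : Fin N, i.castSucc = x :=
    ⟨x.castPred (ha.trans_le (Fin.le_last _)).ne, Fin.castSucc_castPred _ _⟩
  have hmem := mem_image_of_mem Fin.castSucc (hpath i hb ha)
  rw [← image_castSucc_eq_of_length_le h] at hmem
  exact (mem_filter.1 hmem).2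

-- If the cycles were different, the path from `x` up to the larger of the two cycle maxima would
-- pass through the smaller one.
lemma sameCycle_of_containsPath (h : l.length ≤ expectedRank (wordProd l) 1) (hxy : x < y)
    (hpath : ContainsPath l.toFinset x y) : (wordProd l).SameCycle x y := by
  set w := wordProd l
  have path_cycleMax (z) : ContainsPath l.toFinset z (cycleMax w z) :=
    containsPath_of_sameCycle (sameCycle_cycleMax w z)
  have hmax : cycleMax w x = cycleMax w y := by
    rcases lt_trichotomy (cycleMax w x) (cycleMax w y) with hlt | heq | hgt
    · exact absurd (cycleMax_cycleMax w x).symm <| ne_cycleMax_of_containsPath h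
        (hpath.trans (path_cycleMax y)) (self_le_cycleMax w x) hlt
    · exact heq
    · exact absurd (cycleMax_cycleMax w y).symm <| ne_cycleMax_of_containsPath h
        (path_cycleMax x) (hxy.le.trans (self_le_cycleMax w y)) hgt
  exact (sameCycle_cycleMax w x).trans (hmax ▸ (sameCycle_cycleMax w y).symm)

lemma le_card_containsPath_iff :
    m ≤ #{y | x < y ∧ ContainsPath S x y} ↔ x ∈ runStarts S m := by
  rw [mem_runStarts]
  constructor
  · intro h
    rcases m.eq_zero_or_pos with rfl | hm
    · exact ⟨x, rfl, .refl S x⟩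
    have hne : ({y | x < y ∧ ContainsPath S x y} : Finset _).Nonempty :=
      card_pos.1 (hm.trans_le h)
    obtain ⟨z, hz, hmax⟩ := exists_max_image _ id hne
    have hsub : ({y | x < y ∧ ContainsPath S x y} : Finset _) ⊆ Ioc x z := fun y hy =>
      mem_Ioc.2 ⟨(mem_filter.1 hy).2.1, hmax y hy⟩
    have hcard := h.trans (card_le_card hsub)
    rw [Fin.card_Ioc] at hcard
    refine ⟨⟨x + m, by omega⟩, rfl, (mem_filter.1 hz).2.2.mono_right ?_⟩
    rw [Fin.le_def]
    dsimp only
    omega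
  · rintro ⟨y, hy, hpath⟩
    have hsub : Ioc x y ⊆ ({y | x < y ∧ ContainsPath S x y} : Finset _) := fun z hz =>
      mem_filter.2 ⟨mem_univ _, (mem_Ioc.1 hz).1, hpath.mono_right (mem_Ioc.1 hz).2⟩
    refine le_of_eq_of_le ?_ (card_le_card hsub)
    rw [Fin.card_Ioc]
    omega

theorem expectedRank_wordProd (h : l.length ≤ expectedRank (wordProd l) 1) (m : ℕ) :
    expectedRank (wordProd l) m = #(runStarts l.toFinset m) := by
  have larger_eq (x) : largerInCycle (wordProd l) x =
      ({y | x < y ∧ ContainsPath l.toFinset x y} : Finset _) := by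
    ext y
    rw [mem_largerInCycle, mem_filter_univ]
    exact ⟨fun hy => ⟨hy.2, containsPath_of_sameCycle hy.1⟩,
      fun hy => ⟨sameCycle_of_containsPath h hy.1 hy.2, hy.1⟩⟩
  simp_rw [expectedRank_eq_card, larger_eq, le_card_containsPath_iff, filter_univ_mem]

end Paths

open Matrix (transvection)

section PermMat

variable {k : Type*} [Field k] {n : ℕ}

lemma permMat_eq_permMatrixHom (σ : Perm (Fin n)) :
    (permMat σ : Matrix (Fin n) (Fin n) k) = Matrix.permMatrixHom σ := by
  ext i j
  simp [permMat, PEquiv.toMatrix_apply, Equiv.eq_symm_apply, eq_comm]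

lemma permMat_one : (permMat 1 : Matrix (Fin n) (Fin n) k) = 1 := by
  rw [permMat_eq_permMatrixHom, map_one]

lemma permMat_mul (σ τ : Perm (Fin n)) :
    (permMat (σ * τ) : Matrix (Fin n) (Fin n) k) = permMat σ * permMat τ := by
  simp only [permMat_eq_permMatrixHom, map_mul]

lemma isUnit_permMat (σ : Perm (Fin n)) : IsUnit (permMat σ : Matrix (Fin n) (Fin n) k) := by
  rw [permMat_eq_permMatrixHom]
  exact (Group.isUnit σ).map _

lemma permMat_mul_apply (M : Matrix (Fin n) (Fin n) k) (σ : Perm (Fin n)) (i j : Fin n) :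
    (permMat σ * M : Matrix (Fin n) (Fin n) k) (σ i) j = M i j := by
  simp [Matrix.mul_apply, permMat]

lemma mul_permMat_apply (M : Matrix (Fin n) (Fin n) k) (σ : Perm (Fin n)) (i j : Fin n) :
    (M * permMat σ : Matrix (Fin n) (Fin n) k) i j = M i (σ j) := by
  simp [Matrix.mul_apply, permMat]

lemma permMat_mul_transvection (w : Perm (Fin n)) (i j : Fin n) (t : k) :
    permMat w * transvection i j t = transvection (w i) (w j) t * permMat w := by
  ext a b
  obtain ⟨a, rfl⟩ := w.surjective a
  rw [permMat_mul_apply, mul_permMat_apply]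
  simp [transvection, Matrix.one_apply, Matrix.single_apply]

end PermMat

section DoubleCosets

variable {k : Type*} [Field k] {n N : ℕ} {A M b : Matrix (Fin n) (Fin n) k}

variable (k n) in
/-- The Borel subgroup of invertible upper triangular matrices, as a submonoid of the matrix
ring. -/
def borelSubmonoid : Submonoid (Matrix (Fin n) (Fin n) k) :=
  (Matrix.blockTriangularSubsemiring k id).toSubmonoid ⊓ IsUnit.submonoid _

lemma mem_borelSubmonoid : b ∈ borelSubmonoid k n ↔ b.IsUpperTriangular ∧ IsUnit b :=
  Iff.rfl

lemma mem_doubleCoset : M ∈ doubleCoset A ↔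
    ∃ b₁ ∈ borelSubmonoid k n, ∃ b₂ ∈ borelSubmonoid k n, M = b₁ * A * b₂ := by
  simp only [mem_borelSubmonoid, Matrix.isUnit_iff_isUnit_det]
  constructor
  · rintro ⟨b₁, b₂, h₁, h₂, hu₁, hu₂, rfl⟩
    exact ⟨b₁, ⟨@h₁, hu₁⟩, b₂, ⟨@h₂, hu₂⟩, rfl⟩
  · rintro ⟨b₁, ⟨h₁, hu₁⟩, b₂, ⟨h₂, hu₂⟩, rfl⟩
    exact ⟨b₁, b₂, @h₁, @h₂, hu₁, hu₂, rfl⟩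

lemma mem_doubleCoset_self (A : Matrix (Fin n) (Fin n) k) : A ∈ doubleCoset A :=
  mem_doubleCoset.2 ⟨1, one_mem _, 1, one_mem _, by simp⟩

lemma mul_mem_doubleCoset (hb : b ∈ borelSubmonoid k n) (hM : M ∈ doubleCoset A) :
    b * M ∈ doubleCoset A := by
  obtain ⟨b₁, h₁, b₂, h₂, rfl⟩ := mem_doubleCoset.1 hM
  exact mem_doubleCoset.2 ⟨b * b₁, mul_mem hb h₁, b₂, h₂, by simp only [mul_assoc]⟩

lemma mem_doubleCoset_mul (hM : M ∈ doubleCoset A) (hb : b ∈ borelSubmonoid k n) :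
    M * b ∈ doubleCoset A := by
  obtain ⟨b₁, h₁, b₂, h₂, rfl⟩ := mem_doubleCoset.1 hM
  exact mem_doubleCoset.2 ⟨b₁, h₁, b₂ * b, mul_mem h₂ hb, by simp only [mul_assoc]⟩

lemma isUnit_of_mem_doubleCoset (hA : IsUnit A) (hM : M ∈ doubleCoset A) : IsUnit M := by
  obtain ⟨b₁, h₁, b₂, h₂, rfl⟩ := mem_doubleCoset.1 hM
  exact (h₁.2.mul hA).mul h₂.2

lemma exists_mul_of_mem_doubleCoset_permMat_mul {v w : Perm (Fin n)}
    (hM : M ∈ doubleCoset (permMat (v * w))) :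
    ∃ X ∈ doubleCoset (permMat (k := k) v), ∃ Y ∈ doubleCoset (permMat (k := k) w),
      M = X * Y := by
  obtain ⟨b₁, h₁, b₂, h₂, rfl⟩ := mem_doubleCoset.1 hM
  refine ⟨b₁ * permMat v, mul_mem_doubleCoset h₁ (mem_doubleCoset_self _),
    permMat w * b₂, mem_doubleCoset_mul (mem_doubleCoset_self _) h₂, ?_⟩
  simp only [permMat_mul, mul_assoc]

lemma diag_ne_zero_of_mem_borelSubmonoid (hb : b ∈ borelSubmonoid k n) (i : Fin n) : b i i ≠ 0 := by
  have hdet := (Matrix.isUnit_iff_isUnit_det b).1 hb.2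
  rw [Matrix.det_of_isUpperTriangular hb.1] at hdet
  exact prod_ne_zero_iff.1 hdet.ne_zero i (mem_univ i)

lemma transvection_mem_borelSubmonoid {i j : Fin n} (hij : i < j) (t : k) :
    transvection i j t ∈ borelSubmonoid k n := by
  refine mem_borelSubmonoid.2 ⟨Matrix.blockTriangular_transvection hij.le t, ?_⟩
  rw [Matrix.isUnit_iff_isUnit_det, Matrix.det_transvection_of_ne i j hij.ne]
  exact isUnit_one

lemma permMat_simpleSwap_mul_self (i : Fin N) :
    (permMat (simpleSwap i) * permMat (simpleSwap i) : Matrix (Fin (N + 1)) (Fin (N + 1)) k) =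
      1 := by
  rw [← permMat_mul, simpleSwap_mul_self, permMat_one]

-- `s B s ∩ B` consists of the elements of `B` whose `(i, i + 1)` entry vanishes.
lemma simpleSwap_conj_mem_borelSubmonoid {i : Fin N} {b : Matrix (Fin (N + 1)) (Fin (N + 1)) k}
    (hb : b ∈ borelSubmonoid k (N + 1)) (h0 : b i.castSucc i.succ = 0) :
    permMat (simpleSwap i) * b * permMat (simpleSwap i) ∈ borelSubmonoid k (N + 1) := by
  refine mem_borelSubmonoid.2 ⟨fun a c hca => ?_,
    ((isUnit_permMat _).mul hb.2).mul (isUnit_permMat _)⟩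
  obtain ⟨a, rfl⟩ := (simpleSwap i).surjective a
  rw [mul_permMat_apply, permMat_mul_apply]
  by_cases h : (c, simpleSwap i a) = (i.castSucc, i.succ)
  · obtain ⟨rfl, ha⟩ := Prod.ext_iff.1 h
    obtain rfl : a = i.castSucc := (simpleSwap i).injective (by simpa using ha)
    rwa [simpleSwap_castSucc]
  · have hlt := simpleSwap_lt_simpleSwap hca h
    rw [id, id, ← Perm.mul_apply, simpleSwap_mul_self] at hlt
    exact hb.1 hlt

lemma exists_mul_permMat_simpleSwap_eq {b : Matrix (Fin (N + 1)) (Fin (N + 1)) k}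
    (hb : b ∈ borelSubmonoid k (N + 1)) (i : Fin N) :
    ∃ t, ∃ d ∈ borelSubmonoid k (N + 1), b * permMat (simpleSwap i) =
      transvection i.castSucc i.succ t * permMat (simpleSwap i) * d := by
  have hlt : i.castSucc < i.succ := i.castSucc_lt_succ
  let t : k := b i.castSucc i.succ / b i.succ i.succ
  let b' := transvection i.castSucc i.succ (-t) * b
  have hb' : b' ∈ borelSubmonoid k (N + 1) := mul_mem (transvection_mem_borelSubmonoid hlt _) hb
  have h0 : (transvection i.castSucc i.succ (-t) * b) i.castSucc i.succ = 0 := by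
    rw [Matrix.transvection_mul_apply_same, neg_mul,
      div_mul_cancel₀ _ (diag_ne_zero_of_mem_borelSubmonoid hb _), add_neg_cancel]
  have hbb' : b = transvection i.castSucc i.succ t * b' := by
    rw [← mul_assoc, Matrix.transvection_mul_transvection_same _ _ hlt.ne, add_neg_cancel,
      Matrix.transvection_zero, one_mul]
  refine ⟨t, _, simpleSwap_conj_mem_borelSubmonoid hb' h0, ?_⟩
  conv_lhs => rw [hbb', mul_assoc]
  simp only [mul_assoc]
  rw [← mul_assoc (permMat (simpleSwap i)) (permMat (simpleSwap i)),
    permMat_simpleSwap_mul_self, one_mul]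

-- The hypothesis says that `w * simpleSwap i` is longer than `w`.
lemma mul_mem_doubleCoset_permMat_mul_simpleSwap {w : Perm (Fin (N + 1))} {i : Fin N}
    (hw : w i.castSucc < w i.succ) {A B : Matrix (Fin (N + 1)) (Fin (N + 1)) k}
    (hA : A ∈ doubleCoset (permMat w)) (hB : B ∈ doubleCoset (permMat (simpleSwap i))) :
    A * B ∈ doubleCoset (permMat (w * simpleSwap i)) := by
  obtain ⟨b₁, h₁, b₂, h₂, rfl⟩ := mem_doubleCoset.1 hA
  obtain ⟨c₁, g₁, c₂, g₂, rfl⟩ := mem_doubleCoset.1 hB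
  obtain ⟨t, d, hd, hswap⟩ := exists_mul_permMat_simpleSwap_eq (mul_mem h₂ g₁) i
  refine mem_doubleCoset.2 ⟨b₁ * transvection (w i.castSucc) (w i.succ) t,
    mul_mem h₁ (transvection_mem_borelSubmonoid hw t), d * c₂, mul_mem hd g₂, ?_⟩
  let s : Matrix (Fin (N + 1)) (Fin (N + 1)) k := permMat (simpleSwap i)
  calc b₁ * permMat w * b₂ * (c₁ * s * c₂)
      = b₁ * permMat w * (b₂ * c₁ * s) * c₂ := by simp only [mul_assoc]
    _ = b₁ * (permMat w * transvection i.castSucc i.succ t) * s * (d * c₂) := by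
      rw [hswap]
      simp only [s, mul_assoc]
    _ = b₁ * transvection (w i.castSucc) (w i.succ) t * permMat (w * simpleSwap i) * (d * c₂) := by
      rw [permMat_mul_transvection, permMat_mul]
      simp only [s, mul_assoc]

lemma wordProd_castSucc_lt_wordProd_succ {l : List (Fin N)} {i : Fin N} (hi : i ∉ l) :
    wordProd l i.castSucc < wordProd l i.succ :=
  ((wordProd_apply_le_castSucc_iff hi _).2 le_rfl).trans_lt
    (not_le.1 ((wordProd_apply_le_castSucc_iff hi _).not.2 i.castSucc_lt_succ.not_ge))

theorem mul_mem_doubleCoset_permMat_wordProd_append {l l' : List (Fin N)}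
    {A B : Matrix (Fin (N + 1)) (Fin (N + 1)) k} (hl : (l ++ l').Nodup)
    (hA : A ∈ doubleCoset (permMat (wordProd l))) (hB : B ∈ doubleCoset (permMat (wordProd l'))) :
    A * B ∈ doubleCoset (permMat (wordProd (l ++ l'))) := by
  induction l' generalizing l A B with
  | nil =>
    rw [wordProd_nil, permMat_one] at hB
    obtain ⟨c₁, g₁, c₂, g₂, rfl⟩ := mem_doubleCoset.1 hB
    rw [mul_one, List.append_nil]
    exact mem_doubleCoset_mul hA (mul_mem g₁ g₂)
  | cons j l' ih =>
    rw [wordProd_cons] at hB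
    obtain ⟨X, hX, Y, hY, rfl⟩ := exists_mul_of_mem_doubleCoset_permMat_mul hB
    have hj : j ∉ l := fun h => List.disjoint_of_nodup_append hl h List.mem_cons_self
    have hAX := mul_mem_doubleCoset_permMat_mul_simpleSwap
      (wordProd_castSucc_lt_wordProd_succ hj) hA hX
    rw [List.append_cons] at hl ⊢
    rw [← mul_assoc]
    exact ih hl (by simpa using hAX) hY

end DoubleCosets

section CyclicShifts

lemma isConj_mul_comm_of_isUnit {M : Type*} [Monoid M] {x : M} (hx : IsUnit x) (y : M) :
    IsConj (x * y) (y * x) := by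
  obtain ⟨u, rfl⟩ := hx
  exact IsConj.symm ⟨u, (mul_assoc _ _ _).symm⟩

lemma rank_sub_one_pow_eq_of_isConj {R ι : Type*} [CommRing R] [Fintype ι] [DecidableEq ι]
    {A B : Matrix ι ι R} (h : IsConj A B) (m : ℕ) : ((A - 1) ^ m).rank = ((B - 1) ^ m).rank := by
  obtain ⟨c, hc⟩ := h
  have hdet : IsUnit (c : Matrix ι ι R).det := (Matrix.isUnit_iff_isUnit_det _).1 c.isUnit
  have hsemi : SemiconjBy (c : Matrix ι ι R) ((A - 1) ^ m) ((B - 1) ^ m) :=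
    (hc.sub_right (.one_right _)).pow_right m
  rw [← Matrix.rank_mul_eq_right_of_isUnit_det _ ((A - 1) ^ m) hdet, hsemi.eq,
    Matrix.rank_mul_eq_left_of_isUnit_det _ _ hdet]

lemma exists_eq_append_cons_forall_lt {α : Type*} [LinearOrder α] {l : List α} (hne : l ≠ [])
    (hl : l.Nodup) : ∃ l₁ j l₂, l = l₁ ++ j :: l₂ ∧ ∀ i ∈ l₂ ++ l₁, i < j := by
  obtain ⟨j, hj, hmax⟩ := l.toFinset.exists_max_image id ((List.toFinset_nonempty_iff l).2 hne)
  obtain ⟨l₁, l₂, rfl⟩ := List.append_of_mem (List.mem_toFinset.1 hj)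
  refine ⟨l₁, j, l₂, rfl, fun i hi => ?_⟩
  have hperm : (l₁ ++ j :: l₂).Perm (j :: (l₂ ++ l₁)) :=
    List.perm_middle.trans (List.perm_append_comm.cons j)
  refine (hmax i (List.mem_toFinset.2 (hperm.symm.subset (List.mem_cons_of_mem _ hi)))).lt_of_ne ?_
  rintro rfl
  exact (List.nodup_cons.1 (hperm.nodup_iff.1 hl)).1 hi

variable {k : Type*} [Field k] {N : ℕ} {g : Matrix (Fin (N + 1)) (Fin (N + 1)) k}

lemma exists_isConj_mem_doubleCoset_append_comm {l l' : List (Fin N)} (hl : (l ++ l').Nodup)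
    (hg : g ∈ doubleCoset (permMat (wordProd (l ++ l')))) :
    ∃ g' ∈ doubleCoset (permMat (wordProd (l' ++ l))), IsConj g g' := by
  rw [wordProd_append] at hg
  obtain ⟨X, hX, Y, hY, rfl⟩ := exists_mul_of_mem_doubleCoset_permMat_mul hg
  exact ⟨Y * X,
    mul_mem_doubleCoset_permMat_wordProd_append (List.perm_append_comm.nodup_iff.1 hl) hY hX,
    isConj_mul_comm_of_isUnit (isUnit_of_mem_doubleCoset (isUnit_permMat _) hX) Y⟩

-- The tail `t` is already sorted. The letters behind the largest letter `j` of `l` commute with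
-- `t`, so they can be moved to the end of the word and from there, by conjugation, to its front;
-- then `j` joins the sorted tail.
lemma exists_isConj_mem_doubleCoset_sorted_append {l t : List (Fin N)} (hnd : (l ++ t).Nodup)
    (ht : t.Pairwise (· < ·)) (hlt : ∀ i ∈ l, ∀ j ∈ t, i < j)
    (hg : g ∈ doubleCoset (permMat (wordProd (l ++ t)))) :
    ∃ t' : List (Fin N), t'.Pairwise (· < ·) ∧ t'.Perm (l ++ t) ∧
      ∃ g' ∈ doubleCoset (permMat (wordProd t')), IsConj g g' := by
  induction hd : l.length generalizing l t g with
  | zero =>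
    obtain rfl := List.length_eq_zero_iff.1 hd
    exact ⟨t, ht, .refl t, g, hg, .refl g⟩
  | succ d ih =>
    obtain ⟨l₁, j, l₂, rfl, hj⟩ := exists_eq_append_cons_forall_lt
      (List.length_pos_iff.1 (hd ▸ d.succ_pos)) (List.nodup_append.1 hnd).1
    have hjt : ∀ i ∈ t, j < i := hlt j (by simp)
    have hcomm : Commute (wordProd l₂) (wordProd t) := commute_wordProd fun a ha b hb => by
      have haj := hj a (List.mem_append_left _ ha)
      have hjb := hjt b hb
      rw [Fin.lt_def] at haj hjb
      omega
    have hword : wordProd (l₁ ++ j :: l₂ ++ t) = wordProd ((l₁ ++ j :: t) ++ l₂) := by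
      simp [hcomm.eq]
    have hperm : (l₁ ++ j :: l₂ ++ t).Perm ((l₁ ++ j :: t) ++ l₂) := by
      simp only [List.append_assoc, List.cons_append]
      exact (List.perm_append_comm.cons j).append_left l₁
    rw [hword] at hg
    obtain ⟨g', hg', hconj⟩ :=
      exists_isConj_mem_doubleCoset_append_comm (hperm.nodup_iff.1 hnd) hg
    have hperm' : (l₁ ++ j :: l₂ ++ t).Perm ((l₂ ++ l₁) ++ j :: t) := by
      rw [List.append_assoc l₂]
      exact hperm.trans List.perm_append_comm
    rw [← List.append_assoc] at hg'
    obtain ⟨t', ht', hperm_t', g'', hg'', hconj'⟩ := ih (hperm'.nodup_iff.1 hnd)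
      (List.pairwise_cons.2 ⟨hjt, ht⟩)
      (fun a ha b hb => (List.mem_cons.1 hb).elim (fun h => h ▸ hj a ha)
        fun hb => (hj a ha).trans (hjt b hb))
      hg' (by simp at hd ⊢; omega)
    exact ⟨t', ht', hperm_t'.trans hperm'.symm, g'', hg'', hconj.trans hconj'⟩

theorem exists_isConj_mem_doubleCoset_sorted {l : List (Fin N)} (hl : l.Nodup)
    (hg : g ∈ doubleCoset (permMat (wordProd l))) :
    ∃ t : List (Fin N), t.Pairwise (· < ·) ∧ t.Perm l ∧
      ∃ g' ∈ doubleCoset (permMat (wordProd t)), IsConj g g' := by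
  rw [← List.append_nil l] at hl hg ⊢
  exact exists_isConj_mem_doubleCoset_sorted_append hl .nil (by simp) hg

end CyclicShifts

section LowerBandwidth

variable {R : Type*} {n : ℕ}

/-- All entries more than `p` places below the diagonal vanish: `p = 0` means upper triangular,
`p = 1` upper Hessenberg. -/
def HasLowerBandwidth [Zero R] (p : ℕ) (A : Matrix (Fin n) (Fin n) R) : Prop :=
  ∀ a c : Fin n, (c : ℕ) + p < a → A a c = 0

namespace HasLowerBandwidth

lemma one [Zero R] [One R] (p : ℕ) :
    HasLowerBandwidth p (1 : Matrix (Fin n) (Fin n) R) := fun a c h =>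
  Matrix.one_apply_ne (by rintro rfl; omega)

lemma sub [AddGroup R] {p : ℕ} {A B : Matrix (Fin n) (Fin n) R} (hA : HasLowerBandwidth p A)
    (hB : HasLowerBandwidth p B) : HasLowerBandwidth p (A - B) := fun a c h => by
  rw [Matrix.sub_apply, hA a c h, hB a c h, sub_zero]

section Semiring

variable [Semiring R] {A B : Matrix (Fin n) (Fin n) R} {p q : ℕ} {a c x : Fin n}

lemma mul (hA : HasLowerBandwidth p A) (hB : HasLowerBandwidth q B) :
    HasLowerBandwidth (p + q) (A * B) := by
  intro a c hac
  rw [Matrix.mul_apply]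
  refine sum_eq_zero fun x _ => ?_
  rcases lt_or_ge ((x : ℕ) + p) a with h | h
  · rw [hA a x h, zero_mul]
  · rw [hB x c (by omega), mul_zero]

lemma mul_apply (hA : HasLowerBandwidth p A) (hB : HasLowerBandwidth q B) (hx : (x : ℕ) = c + q)
    (ha : (a : ℕ) = x + p) : (A * B) a c = A a x * B x c := by
  rw [Matrix.mul_apply]
  refine sum_eq_single_of_mem x (mem_univ x) fun y _ hyx => ?_
  rcases lt_or_gt_of_ne hyx with h | h
  · rw [hA a y (by omega), zero_mul]
  · rw [hB y c (by omega), mul_zero]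

lemma pow (hA : HasLowerBandwidth p A) (m : ℕ) : HasLowerBandwidth (m * p) (A ^ m) := by
  induction m with
  | zero => simpa using one 0
  | succ m ih =>
    rw [pow_succ, Nat.succ_mul]
    exact ih.mul hA

end Semiring

lemma pow_apply_ne_zero [Semiring R] [NoZeroDivisors R] [Nontrivial R] {N m : ℕ}
    {A : Matrix (Fin (N + 1)) (Fin (N + 1)) R} (hA : HasLowerBandwidth 1 A) {S : Finset (Fin N)}
    (hS : ∀ i ∈ S, A i.succ i.castSucc ≠ 0) {a c : Fin (N + 1)} (hac : (a : ℕ) = c + m)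
    (hpath : ContainsPath S c a) : (A ^ m) a c ≠ 0 := by
  induction m generalizing a with
  | zero =>
    obtain rfl : a = c := Fin.ext hac
    simp
  | succ m ih =>
    obtain ⟨i, rfl⟩ : ∃ i : Fin N, i.succ = a := ⟨a.pred (by rintro rfl; simp at hac), by simp⟩
    rw [Fin.val_succ] at hac
    have hci : (i.castSucc : ℕ) = c + m := by rw [Fin.val_castSucc]; omega
    have hAm : HasLowerBandwidth m (A ^ m) := by simpa using hA.pow m
    rw [pow_succ', hA.mul_apply hAm hci (by simp)]
    refine mul_ne_zero (hS i (hpath i ?_ i.castSucc_lt_succ)) (ih hci (hpath.mono_right ?_))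
    · rw [Fin.le_def]
      omega
    · exact i.castSucc_lt_succ.le

-- The rows shifted by `p` cut out a triangular submatrix with nonzero diagonal.
lemma card_le_rank [Field R] {p : ℕ} {A : Matrix (Fin n) (Fin n) R} (hA : HasLowerBandwidth p A)
    {S : Finset (Fin n)} (hS : ∀ c ∈ S, ∃ a : Fin n, (a : ℕ) = c + p ∧ A a c ≠ 0) :
    #S ≤ A.rank := by
  choose! r hr hne using hS
  let M : Matrix S S R := A.submatrix (fun c => r c) (fun c => c)
  have htri : M.IsUpperTriangular := fun x y (hyx : y.1 < x.1) => hA _ _ <| by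
    dsimp only
    rw [hr x x.2]
    omega
  have hdet : M.det ≠ 0 := by
    rw [Matrix.det_of_isUpperTriangular htri]
    exact prod_ne_zero_iff.2 fun x _ => hne x x.2
  calc #S = M.rank := by rw [Matrix.rank_of_det_ne_zero hdet, Fintype.card_coe]
    _ ≤ A.rank := Matrix.rank_submatrix_le A _ _

end HasLowerBandwidth

end LowerBandwidth

section LowerBound

variable {k : Type*} [Field k] {n N p : ℕ} {A M b : Matrix (Fin n) (Fin n) k}
  {t l : List (Fin N)}

lemma hasLowerBandwidth_of_mem_borelSubmonoid (hb : b ∈ borelSubmonoid k n) :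
    HasLowerBandwidth 0 b :=
  fun _ _ h => hb.1 h

lemma HasLowerBandwidth.of_mem_doubleCoset (hA : HasLowerBandwidth p A)
    (hM : M ∈ doubleCoset A) : HasLowerBandwidth p M := by
  obtain ⟨b₁, h₁, b₂, h₂, rfl⟩ := mem_doubleCoset.1 hM
  simpa using ((hasLowerBandwidth_of_mem_borelSubmonoid h₁).mul hA).mul
    (hasLowerBandwidth_of_mem_borelSubmonoid h₂)

lemma HasLowerBandwidth.apply_ne_zero_of_mem_doubleCoset (hA : HasLowerBandwidth p A)
    (hM : M ∈ doubleCoset A) {a c : Fin n} (hac : (a : ℕ) = c + p) (hne : A a c ≠ 0) :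
    M a c ≠ 0 := by
  obtain ⟨b₁, h₁, b₂, h₂, rfl⟩ := mem_doubleCoset.1 hM
  have hb₁ := hasLowerBandwidth_of_mem_borelSubmonoid h₁
  have hb₂ := hasLowerBandwidth_of_mem_borelSubmonoid h₂
  rw [(hb₁.mul hA).mul_apply hb₂ rfl (by omega), hb₁.mul_apply hA hac rfl]
  exact mul_ne_zero (mul_ne_zero (diag_ne_zero_of_mem_borelSubmonoid h₁ a) hne)
    (diag_ne_zero_of_mem_borelSubmonoid h₂ c)

lemma wordProd_apply_eq_self {x : Fin (N + 1)} (h : ∀ i ∈ t, x < i.castSucc) :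
    wordProd t x = x := by
  induction t with
  | nil => rfl
  | cons i t ih =>
    rw [wordProd_cons, Perm.mul_apply, ih fun j hj => h j (List.mem_cons_of_mem _ hj)]
    have := h i List.mem_cons_self
    rw [Fin.lt_def, Fin.val_castSucc] at this
    apply Fin.ext
    rw [val_simpleSwap]
    split_ifs <;> omega

lemma wordProd_apply_le_of_pairwise_lt (ht : t.Pairwise (· < ·)) (x : Fin (N + 1)) :
    (wordProd t x : ℕ) ≤ x + 1 := by
  induction t with
  | nil => simp
  | cons i t ih =>
    obtain ⟨hi, ht⟩ := List.pairwise_cons.1 ht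
    have hfix : wordProd t i.castSucc = i.castSucc := wordProd_apply_eq_self hi
    have hx := ih ht
    rw [wordProd_cons, Perm.mul_apply, val_simpleSwap]
    split_ifs with h
    · obtain rfl : x = i.castSucc := (wordProd t).injective (by rw [hfix]; exact Fin.ext h)
      rfl
    · omega
    · exact hx

lemma wordProd_castSucc_of_pairwise_lt (ht : t.Pairwise (· < ·)) {i : Fin N} (hi : i ∈ t) :
    wordProd t i.castSucc = i.succ := by
  induction t with
  | nil => simp at hi
  | cons j t ih =>
    obtain ⟨hj, ht⟩ := List.pairwise_cons.1 ht
    rw [wordProd_cons, Perm.mul_apply]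
    rcases List.mem_cons.1 hi with rfl | hi
    · rw [wordProd_apply_eq_self hj, simpleSwap_castSucc]
    · have hji : j.succ < i.succ := Fin.succ_lt_succ_iff.2 (hj i hi)
      rw [ih ht hi, simpleSwap, swap_apply_of_ne_of_ne (j.castSucc_lt_succ.trans hji).ne' hji.ne']

lemma hasLowerBandwidth_permMat_wordProd (ht : t.Pairwise (· < ·)) :
    HasLowerBandwidth 1 (permMat (wordProd t) : Matrix (Fin (N + 1)) (Fin (N + 1)) k) := by
  intro a c hca
  have hc := wordProd_apply_le_of_pairwise_lt ht c
  refine if_neg ?_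
  rintro rfl
  omega

theorem card_runStarts_le_rank {g : Matrix (Fin (N + 1)) (Fin (N + 1)) k} (hl : l.Nodup)
    (hg : g ∈ doubleCoset (permMat (wordProd l))) (m : ℕ) :
    #(runStarts l.toFinset m) ≤ ((g - 1) ^ m).rank := by
  obtain ⟨t, ht, hperm, g', hg', hconj⟩ := exists_isConj_mem_doubleCoset_sorted hl hg
  rw [rank_sub_one_pow_eq_of_isConj hconj, ← List.toFinset_eq_of_perm t l hperm]
  have hP : HasLowerBandwidth 1 (permMat (wordProd t) : Matrix _ _ k) :=
    hasLowerBandwidth_permMat_wordProd ht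
  have hA : HasLowerBandwidth 1 (g' - 1) := (hP.of_mem_doubleCoset hg').sub (.one 1)
  have hsub : ∀ i ∈ t.toFinset, (g' - 1) i.succ i.castSucc ≠ 0 := by
    intro i hi
    have hPi : permMat (wordProd t) i.succ i.castSucc ≠ (0 : k) := by
      simp [permMat, wordProd_castSucc_of_pairwise_lt ht (List.mem_toFinset.1 hi)]
    rw [Matrix.sub_apply, Matrix.one_apply_ne i.castSucc_lt_succ.ne', sub_zero]
    exact hP.apply_ne_zero_of_mem_doubleCoset hg' rfl hPi
  have hAm : HasLowerBandwidth m ((g' - 1) ^ m) := by simpa using hA.pow m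
  refine hAm.card_le_rank fun c hc => ?_
  obtain ⟨a, hac, hpath⟩ := mem_runStarts.1 hc
  exact ⟨a, hac, hA.pow_apply_ne_zero hsub hac hpath⟩

end LowerBound

section Witness

variable {R k : Type*} {N m : ℕ} {S : Finset (Fin N)}

/-- A nonzero entry `A a b` forces `a` to lie at least `m` above `b` in the same connected
component of the subgraph `S` of the path. For `m = 1`, these are the strictly lower triangular
block diagonal matrices whose blocks are the connected components of `S`. -/
def IsBlockLower [Zero R] (S : Finset (Fin N)) (m : ℕ) (A : Matrix (Fin (N + 1)) (Fin (N + 1)) R) :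
    Prop :=
  ∀ a b : Fin (N + 1), A a b ≠ 0 → (b : ℕ) + m ≤ a ∧ ContainsPath S b a

namespace IsBlockLower

lemma mono [Zero R] {A : Matrix (Fin (N + 1)) (Fin (N + 1)) R} {m' : ℕ} (h : IsBlockLower S m A)
    (hm : m' ≤ m) : IsBlockLower S m' A := fun a b hab =>
  ⟨(Nat.add_le_add_left hm _).trans (h a b hab).1, (h a b hab).2⟩

lemma mono_set [Zero R] {A : Matrix (Fin (N + 1)) (Fin (N + 1)) R} {S' : Finset (Fin N)}
    (h : IsBlockLower S m A) (hS : S ⊆ S') : IsBlockLower S' m A := fun a b hab =>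
  ⟨(h a b hab).1, fun i hb ha => hS ((h a b hab).2 i hb ha)⟩

section Semiring

variable [Semiring R] {A B : Matrix (Fin (N + 1)) (Fin (N + 1)) R} {p q : ℕ}

lemma one : IsBlockLower S 0 (1 : Matrix (Fin (N + 1)) (Fin (N + 1)) R) := by
  intro a b hab
  obtain rfl : a = b := by_contra fun hne => hab (Matrix.one_apply_ne hne)
  exact ⟨le_rfl, .refl S a⟩

lemma add (hA : IsBlockLower S m A) (hB : IsBlockLower S m B) : IsBlockLower S m (A + B) := by
  intro a b hab
  by_cases h : A a b = 0
  · exact hB a b fun h' => hab (by rw [Matrix.add_apply, h, h', add_zero])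
  · exact hA a b h

lemma mul (hA : IsBlockLower S p A) (hB : IsBlockLower S q B) :
    IsBlockLower S (p + q) (A * B) := by
  intro a b hab
  obtain ⟨x, -, hx⟩ := exists_ne_zero_of_sum_ne_zero (Matrix.mul_apply (M := A) ▸ hab)
  obtain ⟨hxa, hpath⟩ := hA a x (left_ne_zero_of_mul hx)
  obtain ⟨hbx, hpath'⟩ := hB x b (right_ne_zero_of_mul hx)
  exact ⟨by omega, hpath'.trans hpath⟩

lemma pow (hA : IsBlockLower S 1 A) (m : ℕ) : IsBlockLower S m (A ^ m) := by
  induction m with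
  | zero => exact pow_zero A ▸ one
  | succ m ih => exact pow_succ A m ▸ ih.mul hA

lemma pow_eq_zero (hA : IsBlockLower S 1 A) : A ^ (N + 1) = 0 := by
  ext a b
  by_contra hab
  have := (hA.pow _ a b hab).1
  omega

end Semiring

lemma rank_le [Field R] {A : Matrix (Fin (N + 1)) (Fin (N + 1)) R} (hA : IsBlockLower S m A) :
    A.rank ≤ #(runStarts S m) := by
  rw [← Matrix.rank_transpose]
  refine Matrix.rank_le_card_of_support_subset _ _ fun b hb => ?_
  obtain ⟨a, hab⟩ := Function.ne_iff.1 hb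
  obtain ⟨hle, hpath⟩ := hA a b hab
  exact mem_runStarts.2 ⟨⟨b + m, hle.trans_lt a.2⟩, rfl, hpath.mono_right hle⟩

end IsBlockLower

variable [Field k]

lemma permMat_simpleSwap (i : Fin N) :
    (permMat (simpleSwap i) : Matrix (Fin (N + 1)) (Fin (N + 1)) k) =
      1 - .single i.castSucc i.castSucc 1 - .single i.succ i.succ 1 +
        .single i.castSucc i.succ 1 + .single i.succ i.castSucc 1 := by
  have hne : i.castSucc ≠ i.succ := i.castSucc_lt_succ.ne
  ext a b
  simp only [permMat, simpleSwap, Matrix.of_apply, swap_apply_def, Matrix.add_apply,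
    Matrix.sub_apply, Matrix.one_apply, Matrix.single_apply]
  grind

-- This is the identity
-- `!![1, 0; 1, 1] = !![1, 1; 0, 1] * !![0, 1; 1, 0] * (!![1, 0; 0, -1] * !![1, 1; 0, 1])`.
lemma transvection_succ_castSucc_mem_doubleCoset (i : Fin N) :
    transvection i.succ i.castSucc (1 : k) ∈ doubleCoset (permMat (simpleSwap i)) := by
  have hlt : i.castSucc < i.succ := i.castSucc_lt_succ
  have hT := transvection_mem_borelSubmonoid hlt (1 : k)
  let d : Fin (N + 1) → k := 1 - Pi.single i.succ 2
  have hd : Matrix.diagonal d ∈ borelSubmonoid k (N + 1) := by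
    refine mem_borelSubmonoid.2 ⟨Matrix.blockTriangular_diagonal d, ?_⟩
    rw [Matrix.isUnit_diagonal, Pi.isUnit_iff]
    intro j
    rcases eq_or_ne j i.succ with rfl | h
    · norm_num [d]
    · simp [d, h]
  have hd' : Matrix.diagonal d = 1 - .single i.succ i.succ 2 := by
    rw [← Matrix.diagonal_single, ← Matrix.diagonal_one, Matrix.diagonal_sub]
    rfl
  refine mem_doubleCoset.2 ⟨_, hT, _, mul_mem hd hT, ?_⟩
  rw [hd', permMat_simpleSwap, ← one_add_one_eq_two, Matrix.single_add]
  simp only [transvection]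
  simp [mul_add, add_mul, mul_sub, sub_mul, hlt.ne, hlt.ne']
  abel

variable (k) in
/-- The product along a word of the elementary lower unipotent matrices of its letters. -/
def lowerProd (l : List (Fin N)) : Matrix (Fin (N + 1)) (Fin (N + 1)) k :=
  (l.map fun i => transvection i.succ i.castSucc 1).prod

lemma lowerProd_cons (i : Fin N) (l : List (Fin N)) :
    lowerProd k (i :: l) = transvection i.succ i.castSucc 1 * lowerProd k l :=
  List.prod_cons

theorem lowerProd_mem_doubleCoset {l : List (Fin N)} (hl : l.Nodup) :
    lowerProd k l ∈ doubleCoset (permMat (wordProd l)) := by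
  induction l with
  | nil =>
    rw [wordProd_nil, permMat_one]
    exact mem_doubleCoset_self 1
  | cons i l ih =>
    rw [lowerProd_cons]
    refine mul_mem_doubleCoset_permMat_wordProd_append (l := [i]) hl ?_ (ih hl.of_cons)
    simpa using transvection_succ_castSucc_mem_doubleCoset i

lemma isBlockLower_single {i : Fin N} (hi : i ∈ S) :
    IsBlockLower S 1 (Matrix.single i.succ i.castSucc (1 : k)) := by
  intro a b hab
  obtain ⟨rfl, rfl⟩ : i.succ = a ∧ i.castSucc = b :=
    by_contra fun hne => hab (Matrix.single_apply_of_ne _ _ _ _ _ hne)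
  refine ⟨le_rfl, fun j hij hji => ?_⟩
  obtain rfl : i = j := le_antisymm (Fin.castSucc_le_castSucc_iff.1 hij)
    (Fin.castSucc_lt_succ_iff.1 hji)
  exact hi

theorem isBlockLower_lowerProd_sub_one (l : List (Fin N)) :
    IsBlockLower l.toFinset 1 (lowerProd k l - 1) := by
  induction l with
  | nil => simp [lowerProd, IsBlockLower]
  | cons i l ih =>
    have hsub : IsBlockLower (i :: l).toFinset 1 (lowerProd k l - 1) :=
      ih.mono_set (by simp)
    have hl : IsBlockLower (i :: l).toFinset 0 (lowerProd k l) := by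
      simpa using (hsub.mono zero_le_one).add .one
    have hcons : lowerProd k (i :: l) - 1 =
        Matrix.single i.succ i.castSucc 1 * lowerProd k l + (lowerProd k l - 1) := by
      rw [lowerProd_cons, transvection, add_mul, one_mul]
      abel
    rw [hcons]
    exact ((isBlockLower_single (by simp)).mul hl).add hsub

end Witness

theorem unipotent_class_from_weyl_class_GL_general {k : Type*} [Field k] {n : ℕ}
    (w : Perm (Fin n)) (hmin : ∀ v, IsConj w v → invCount w ≤ invCount v) :
    (∃ u ∈ doubleCoset (permMat (k := k) w),
      (u - 1) ^ n = 0 ∧ ∀ m, ((u - 1) ^ m).rank = expectedRank w m) ∧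
    ∀ g ∈ doubleCoset (permMat (k := k) w), ∀ m, expectedRank w m ≤ ((g - 1) ^ m).rank := by
  cases n with
  | zero =>
    have hrank (m) : expectedRank w m = 0 := by simp [expectedRank_eq_card]
    simp only [hrank]
    exact ⟨⟨permMat w, mem_doubleCoset_self _, Subsingleton.elim _ _,
      fun m => Nat.le_zero.1 (Matrix.rank_le_width _)⟩, fun _ _ _ => Nat.zero_le _⟩
  | succ N =>
    obtain ⟨v, hv, hv'⟩ := exists_isConj_invCount_le w
    obtain ⟨l, rfl, hlen⟩ := exists_wordProd_eq w
    replace hlen : l.length ≤ expectedRank (wordProd l) 1 := hlen.trans ((hmin v hv).trans hv')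
    have hnodup := nodup_of_length_le hlen
    have hlower := isBlockLower_lowerProd_sub_one (k := k) l
    simp only [expectedRank_wordProd hlen]
    exact ⟨⟨lowerProd k l, lowerProd_mem_doubleCoset hnodup, hlower.pow_eq_zero, fun m =>
      le_antisymm (hlower.pow m).rank_le
        (card_runStarts_le_rank hnodup (lowerProd_mem_doubleCoset hnodup) m)⟩,
      fun g hg => card_runStarts_le_rank hnodup hg⟩

/-- The case `G = GL_n` of Lusztig's theorem that the map `Φ` from conjugacy classes in
the Weyl group to unipotent classes is the identity under the identification of both
sides with partitions of `n`: if `w ∈ S_n` has minimal length (number of inversions) in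
its conjugacy class and `λ` is its cycle type, then (1) the Bruhat double coset `B P_w B`
contains a unipotent matrix of Jordan type `λ`, and (2) every unipotent matrix `g` in
`B P_w B` satisfies `rank ((g-1)^m) ≥ Σ_j max(λ_j - m, 0)` for all `m ≥ 1`, i.e. the
unipotent class of type `λ` lies in the closure of the class of `g`. -/
theorem unipotent_class_from_weyl_class_GL {k : Type*} [Field k] [IsAlgClosed k]
    {n : ℕ} (hn : 1 ≤ n) (w : Equiv.Perm (Fin n))
    (hmin : ∀ v : Equiv.Perm (Fin n), IsConj w v → invCount w ≤ invCount v) :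
    (∃ u : Matrix (Fin n) (Fin n) k,
      u ∈ doubleCoset (permMat w) ∧ (u - 1) ^ n = 0 ∧
      ∀ m : ℕ, 1 ≤ m → ((u - 1) ^ m).rank = expectedRank w m) ∧
    (∀ g : Matrix (Fin n) (Fin n) k,
      g ∈ doubleCoset (permMat w) → (g - 1) ^ n = 0 →
      ∀ m : ℕ, 1 ≤ m → expectedRank w m ≤ ((g - 1) ^ m).rank) := by
  obtain ⟨⟨u, hu, hnil, hrank⟩, hle⟩ :=
    unipotent_class_from_weyl_class_GL_general (k := k) w hmin
  exact ⟨⟨u, hu, hnil, fun m _ => hrank m⟩, fun g hg _ m _ => hle g hg m⟩
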